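/- Let λ be a partition of length r and let n, m ∈ N_λ with n ≠ m. Then at every real x with H_λ(x) ≠ 0, the weighted product P_n(x) P_m(x) e^{−x²}/H_λ(x)² equals the derivative at x of the function y ↦ [(P_n(y) P_m'(y) − P_n'(y) P_m(y)) / (2(n − m))] · e^{−y²}/H_λ(y)². -/

import Mathlib

open Polynomial

/-- The physicists' Hermite polynomials: `H 0 = 1`, `H (n+1) = 2X * H n - (H n)'`. -/
noncomputable def physHermite : ℕ → Polynomial ℝ
  | 0 => 1
  | n + 1 => 2 * X * physHermite n - derivative (physHermite n)

/-- Wronskian determinant of a finite family of polynomials. -/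
noncomputable def Wron {m : ℕ} (f : Fin m → Polynomial ℝ) : Polynomial ℝ :=
  Matrix.det (Matrix.of fun i j : Fin m => (fun p => derivative p)^[(i : ℕ)] (f j))

/-- `lam : Fin r → ℕ` is a partition: weakly decreasing with positive parts. -/
def IsPartition (r : ℕ) (lam : Fin r → ℕ) : Prop :=
  (∀ i j : Fin r, i ≤ j → lam j ≤ lam i) ∧ ∀ i, 1 ≤ lam i

/-- An even (double) partition: `r` even and `λ_{2k-1} = λ_{2k}`. -/
def IsEvenPartition (r : ℕ) (lam : Fin r → ℕ) : Prop :=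
  IsPartition r lam ∧ Even r ∧
    ∀ k : ℕ, ∀ h : 2 * k + 1 < r, lam ⟨2 * k, by omega⟩ = lam ⟨2 * k + 1, h⟩

/-- The generalized Hermite polynomial `H_λ = Wr[H_{λ_r}, H_{λ_{r-1}+1}, …, H_{λ_1+r-1}]`. -/
noncomputable def genHermite (r : ℕ) (lam : Fin r → ℕ) : Polynomial ℝ :=
  Wron fun j : Fin r => physHermite (lam (Fin.rev j) + j)

/-- The exceptional Hermite polynomial
`P_n = Wr[H_{λ_r}, H_{λ_{r-1}+1}, …, H_{λ_1+r-1}, H_{n-|λ|+r}]`. -/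
noncomputable def XHermite (r : ℕ) (lam : Fin r → ℕ) (n : ℕ) : Polynomial ℝ :=
  Wron fun j : Fin (r + 1) =>
    if h : (j : ℕ) < r then physHermite (lam (Fin.rev ⟨(j : ℕ), h⟩) + j)
    else physHermite (n + r - ∑ i, lam i)

/-- The degree sequence `N_λ`: `n ≥ |λ| - r` and `n ≠ |λ| + λ_j - j` for `j = 1, …, r`. -/
def XDegSeq (r : ℕ) (lam : Fin r → ℕ) (n : ℕ) : Prop :=
  (∑ i, lam i) ≤ n + r ∧ ∀ i : Fin r, n ≠ (∑ i, lam i) + lam i - ((i : ℕ) + 1)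

/-!
Write `H` for the Wronskian of `F` and `P` for that of `F` followed by one more polynomial `g`.
For two polynomials `P`, `Q` solving the second-order linear equation
`H P'' = 2(xH + H')P' - (H'' + 2xH')P + cHP` with eigenvalues `α`, `β`, Abel's argument gives
`(W e^{-x²}/H²)' = (β - α) P Q e^{-x²}/H²`, where `W = PQ' - P'Q`.

The equation for `P` comes from the following bilinear identity. Let `E(H)` be the sum, over the
rows of the Wronskian matrix, of the determinants in which that row is differentiated twice more.
Cancelling determinants with equal or interchanged rows turns a three-term Plücker relation into
`H(P'' - E(P)) + (H'' + E(H))P = 2H'P'`, for arbitrary `F` and `g`. If `F` and `g` consist of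
eigenpolynomials of `y'' - 2xy'`, then `E(H) = 2xH' + const · H`, and likewise for `P`.
-/

section Determinants

variable {R ι : Type*} [CommRing R] [Fintype ι] [DecidableEq ι]

theorem det_mul_apply_eq_sum_updateRow (A : Matrix ι ι R) (φ : (ι → R) →ₗ[R] R) (v : ι → R) :
    A.det * φ v = ∑ i, φ (A i) * (A.updateRow i v).det := by
  have cramer : A.det • v = ∑ i, (A.updateRow i v).det • A i := by
    have h := A.transpose.mulVec_cramer v
    rw [Matrix.det_transpose, Matrix.mulVec_transpose, Matrix.vecMul_eq_sum] at h
    simpa only [Matrix.cramer_transpose_apply] using! h.symm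
  simpa only [map_smul, map_sum, smul_eq_mul, mul_comm] using congrArg φ cramer

theorem sum_det_updateRow (A B : Matrix ι ι R) :
    ∑ i, (A.updateRow i (B i)).det = (B * A.adjugate).trace := by
  simp only [← Matrix.cramer_transpose_apply, Matrix.cramer_eq_adjugate_mulVec,
    ← Matrix.adjugate_transpose, Matrix.mulVec_transpose]
  simp only [Matrix.trace, Matrix.diag, Matrix.mul_apply, Matrix.vecMul, dotProduct]

theorem trace_mul_mul_adjugate_self (D A : Matrix ι ι R) :
    (D * A * A.adjugate).trace = D.trace * A.det := by
  rw [mul_assoc, A.mul_adjugate, Matrix.mul_smul, mul_one, Matrix.trace_smul, smul_eq_mul, mul_comm]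

theorem trace_self_mul_mul_adjugate (A D : Matrix ι ι R) :
    (A * D * A.adjugate).trace = D.trace * A.det := by
  rw [Matrix.trace_mul_cycle, A.adjugate_mul, Matrix.smul_mul, one_mul, Matrix.trace_smul,
    smul_eq_mul, mul_comm]

theorem derivative_det (A : Matrix ι ι R[X]) :
    derivative A.det = ∑ i, (A.updateRow i fun j => derivative (A i j)).det := by
  have row_expansion (M : Matrix ι ι R[X]) :
      M.det = ∑ σ : Equiv.Perm ι, (Equiv.Perm.sign σ : ℤ) * ∏ i, M i (σ i) := by
    simp only [← M.det_transpose, Matrix.det_apply', Matrix.transpose_apply]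
  simp only [row_expansion, derivative_sum]
  rw [Finset.sum_comm]
  refine Finset.sum_congr rfl fun σ _ => ?_
  rw [derivative_intCast_mul, derivative_prod_finset, Finset.mul_sum]
  refine Finset.sum_congr rfl fun i _ => ?_
  rw [← Finset.mul_prod_erase Finset.univ _ (Finset.mem_univ i), Matrix.updateRow_self,
    mul_comm (derivative _)]
  congr 2
  exact Finset.prod_congr rfl fun j hj => by
    rw [Matrix.updateRow_ne (Finset.ne_of_mem_erase hj)]

end Determinants

section WronskianMinors

variable {R ι : Type*} [CommRing R] [Fintype ι] [DecidableEq ι]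

/-- The matrix whose row `i` consists of the derivatives of order `k i` of the polynomials `F j`. -/
noncomputable def wronMatrix (k : ι → ℕ) (F : ι → R[X]) : Matrix ι ι R[X] :=
  Matrix.of fun i j => derivative^[k i] (F j)

/-- The generalized Wronskian of `F` with derivative orders `k`, that is, a maximal minor of the
infinite matrix of all derivatives of the `F j`. The ordinary Wronskian has `k = Fin.val`. -/
noncomputable def wronMinor (k : ι → ℕ) (F : ι → R[X]) : R[X] :=
  (wronMatrix k F).det

theorem wronMinor_val_eq_wron {n : ℕ} (F : Fin n → ℝ[X]) : wronMinor Fin.val F = Wron F :=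
  rfl

theorem wronMinor_update (k : ι → ℕ) (i : ι) (a : ℕ) (F : ι → R[X]) :
    wronMinor (Function.update k i a) F =
      ((wronMatrix k F).updateRow i fun j => derivative^[a] (F j)).det := by
  unfold wronMinor
  congr 1
  ext i' j : 2
  rcases eq_or_ne i' i with rfl | h
  · simp [wronMatrix]
  · simp [wronMatrix, h]

theorem wronMinor_eq_zero {k : ι → ℕ} {i j : ι} (hij : i ≠ j) (hk : k i = k j) (F : ι → R[X]) :
    wronMinor k F = 0 :=
  Matrix.det_zero_of_row_eq hij <| funext fun l => by simp only [wronMatrix, Matrix.of_apply, hk]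

theorem wronMinor_update_eq_zero (k : ι → ℕ) {i j : ι} (hij : i ≠ j) (F : ι → R[X]) :
    wronMinor (Function.update k i (k j)) F = 0 :=
  wronMinor_eq_zero hij (by simp [hij.symm]) F

theorem wronMinor_comp_swap (k : ι → ℕ) {i j : ι} (hij : i ≠ j) (F : ι → R[X]) :
    wronMinor (k ∘ Equiv.swap i j) F = -wronMinor k F :=
  Matrix.detRowAlternating.map_swap (wronMatrix k F) hij

theorem derivative_wronMinor (k : ι → ℕ) (F : ι → R[X]) :
    derivative (wronMinor k F) = ∑ i, wronMinor (Function.update k i (k i + 1)) F := by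
  simp only [wronMinor_update, Function.iterate_succ_apply']
  exact derivative_det _

variable {n : ℕ} (F : Fin (n + 1) → R[X])

theorem derivative_wronMinor_val :
    derivative (wronMinor Fin.val F) =
      wronMinor (Function.update Fin.val (Fin.last n) (n + 1)) F := by
  rw [derivative_wronMinor, Fin.sum_univ_castSucc, Finset.sum_eq_zero, zero_add, Fin.val_last]
  exact fun i _ => wronMinor_update_eq_zero Fin.val (Fin.castSucc_lt_succ (i := i)).ne F

theorem wronMinor_update_last_update_castSucc (i : Fin n) :
    wronMinor (Function.update (Function.update Fin.val (Fin.last n) (n + 1)) i.castSucc (i + 1)) F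
      = -wronMinor (Function.update Fin.val i.castSucc (i + 2)) F := by
  have hlast : i.castSucc ≠ Fin.last n := i.castSucc_ne_last
  -- For `i + 1 < n` both matrices have a repeated row; for `i + 1 = n` they differ by a row swap.
  rcases (Nat.succ_le_of_lt i.isLt).eq_or_lt with hi | hi
  · rw [← wronMinor_comp_swap _ hlast]
    congr 1
    funext j
    rcases eq_or_ne j i.castSucc with rfl | hj
    · simp only [Function.comp_apply, Equiv.swap_apply_left, Function.update_self,
        Function.update_of_ne hlast.symm, Fin.val_last]
      omega
    rcases eq_or_ne j (Fin.last n) with rfl | hj'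
    · simp only [Function.comp_apply, Equiv.swap_apply_right, Function.update_self,
        Function.update_of_ne hlast.symm]
      omega
    · simp [Equiv.swap_apply_of_ne_of_ne, hj, hj']
  · have left_eq_zero : wronMinor (Function.update
        (Function.update Fin.val (Fin.last n) (n + 1)) i.castSucc (i + 1)) F = 0 := by
      refine wronMinor_eq_zero (i := i.castSucc) (j := ⟨i + 1, by omega⟩)
        (by simp [Fin.ext_iff]) ?_ F
      simp only [Function.update_apply, Fin.ext_iff, Fin.val_castSucc, Fin.val_last]
      grind
    have right_eq_zero : wronMinor (Function.update Fin.val i.castSucc (i + 2)) F = 0 :=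
      wronMinor_update_eq_zero Fin.val (j := ⟨i + 2, by omega⟩) (by simp [Fin.ext_iff]) F
    rw [left_eq_zero, right_eq_zero, neg_zero]

theorem derivative_derivative_wronMinor_val_add_sum :
    derivative (derivative (wronMinor Fin.val F)) +
        ∑ i : Fin (n + 1), wronMinor (Function.update Fin.val i (i + 2)) F =
      2 * wronMinor (Function.update Fin.val (Fin.last n) (n + 2)) F := by
  rw [derivative_wronMinor_val, derivative_wronMinor, Fin.sum_univ_castSucc, Fin.sum_univ_castSucc]
  simp only [Function.update_self, Function.update_idem, ne_eq, Fin.castSucc_ne_last,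
    not_false_eq_true, Function.update_of_ne, Fin.val_castSucc, Fin.val_last,
    wronMinor_update_last_update_castSucc, Finset.sum_neg_distrib]
  ring

theorem sum_wronMinor_val_update_add_two (G : Fin (n + 2) → R[X]) :
    ∑ i : Fin (n + 2), wronMinor (Function.update Fin.val i (i + 2)) G =
      wronMinor (Function.update Fin.val (Fin.last n).castSucc (n + 2)) G +
        wronMinor (Function.update Fin.val (Fin.last (n + 1)) (n + 3)) G := by
  rw [Fin.sum_univ_castSucc, Fin.sum_univ_castSucc, Finset.sum_eq_zero, zero_add]
  · rfl
  · intro i _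
    exact wronMinor_update_eq_zero Fin.val (i := i.castSucc.castSucc) (j := i.succ.succ)
      (Fin.ne_of_lt (by simp [Fin.lt_def])) G

theorem wronMinor_plucker (g : R[X]) (a : ℕ) :
    wronMinor Fin.val (Fin.snoc F g : Fin (n + 2) → R[X]) *
        wronMinor (Function.update Fin.val (Fin.last n) a) F =
      wronMinor Fin.val F *
          wronMinor (Function.update Fin.val (Fin.last n).castSucc a)
            (Fin.snoc F g : Fin (n + 2) → R[X]) +
        derivative (wronMinor Fin.val F) *
          wronMinor (Function.update Fin.val (Fin.last (n + 1)) a)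
            (Fin.snoc F g : Fin (n + 2) → R[X]) := by
  set G : Fin (n + 2) → R[X] := Fin.snoc F g with hG
  -- `φ` is expansion along the last row of the Wronskian matrix of `F`; it annihilates all rows of
  -- the Wronskian matrix of `G` but the last two, so only two terms of Cramer's rule survive.
  let φ : (Fin (n + 2) → R[X]) →ₗ[R[X]] R[X] :=
    Matrix.detRowAlternating.toMultilinearMap.toLinearMap (wronMatrix Fin.val F) (Fin.last n) ∘ₗ
      LinearMap.funLeft R[X] R[X] Fin.castSucc
  have φ_row (m : ℕ) : φ (fun j => derivative^[m] (G j)) =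
      wronMinor (Function.update Fin.val (Fin.last n) m) F := by
    have hrow : LinearMap.funLeft R[X] R[X] Fin.castSucc (fun j => derivative^[m] (G j)) =
        fun j => derivative^[m] (F j) := by
      funext j
      simp [LinearMap.funLeft_apply, hG]
    rw [wronMinor_update, ← hrow]
    rfl
  have φ_lower (i : Fin n) : wronMinor (Function.update Fin.val (Fin.last n) (i : ℕ)) F = 0 :=
    wronMinor_update_eq_zero Fin.val i.castSucc_ne_last.symm F
  have h := det_mul_apply_eq_sum_updateRow (wronMatrix Fin.val G) φ fun j => derivative^[a] (G j)
  have φ_wron (i : Fin (n + 2)) : φ (wronMatrix Fin.val G i) =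
      wronMinor (Function.update Fin.val (Fin.last n) (i : ℕ)) F := φ_row i
  simp only [φ_row, φ_wron, ← wronMinor_update, Fin.sum_univ_castSucc, Fin.val_castSucc, φ_lower,
    zero_mul, Finset.sum_const_zero, zero_add, Fin.val_last] at h
  rw [derivative_wronMinor_val]
  have hself : Function.update Fin.val (Fin.last n) n = Fin.val := Function.update_eq_self _ _
  rwa [hself] at h

theorem wronMinor_snoc_bilinear {n : ℕ} (F : Fin n → R[X]) (g : R[X]) :
    let H := wronMinor Fin.val F
    let G : Fin (n + 1) → R[X] := Fin.snoc F g
    let P := wronMinor Fin.val G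
    H * (derivative (derivative P) - ∑ i, wronMinor (Function.update Fin.val i (i + 2)) G) +
        (derivative (derivative H) + ∑ i, wronMinor (Function.update Fin.val i (i + 2)) F) * P =
      2 * derivative H * derivative P := by
  intro H G P
  cases n with
  | zero =>
    have hH : H = 1 := Matrix.det_isEmpty
    have hG : G 0 = g := Fin.snoc_last _ _
    simp [hH, P, wronMinor, wronMatrix, hG]
  | succ n =>
    have secondH := derivative_derivative_wronMinor_val_add_sum F
    have secondP := derivative_derivative_wronMinor_val_add_sum G
    have sumP := sum_wronMinor_val_update_add_two G
    have plucker := wronMinor_plucker F g (n + 2)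
    rw [← derivative_wronMinor_val] at plucker
    linear_combination H * secondP - 2 * H * sumP + 2 * plucker + P * secondH

end WronskianMinors

section HermiteEigen

variable {R ι : Type*} [CommRing R] [Fintype ι] [DecidableEq ι]

/-- `f` is an eigenpolynomial of the Hermite operator `y ↦ y'' - 2xy'`, with eigenvalue `c`;
`f = 0` is allowed. -/
def IsHermiteEigen (c : R) (f : R[X]) : Prop :=
  derivative (derivative f) = 2 * X * derivative f + C c * f

/-- `P` is an eigenpolynomial, with eigenvalue `c`, of the exceptional Hermite operator
`y ↦ y'' - 2(x + H'/H)y' + (H''/H + 2xH'/H)y`. Denominators are cleared, so that `H` may have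
zeros, and `P = 0` is allowed. -/
def IsExceptionalHermiteEigen (H : R[X]) (c : R) (P : R[X]) : Prop :=
  H * derivative (derivative P) = 2 * (X * H + derivative H) * derivative P
    - (derivative (derivative H) + 2 * X * derivative H) * P + C c * H * P

theorem IsHermiteEigen.iterate_derivative_add_two {c : R} {f : R[X]} (hf : IsHermiteEigen c f)
    (k : ℕ) :
    derivative^[k + 2] f =
      2 * X * derivative^[k + 1] f + 2 * (k : R[X]) * derivative^[k] f +
        C c * derivative^[k] f := by
  induction k with
  | zero => simpa using show derivative (derivative f) = _ from hf
  | succ k ih =>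
    have h := congrArg derivative ih
    simp only [derivative_add, derivative_mul, derivative_ofNat, derivative_X, derivative_natCast,
      derivative_C, Function.iterate_succ_apply'] at h ⊢
    push_cast
    linear_combination h

theorem sum_wronMinor_update_add_two {μ : ι → R} {F : ι → R[X]}
    (hF : ∀ j, IsHermiteEigen (μ j) (F j)) (k : ι → ℕ) :
    ∑ i, wronMinor (Function.update k i (k i + 2)) F =
      2 * X * derivative (wronMinor k F) +
        (2 * ∑ i, (k i : R[X]) + C (∑ j, μ j)) * wronMinor k F := by
  set A := wronMatrix k F with hA
  have rows : wronMatrix (fun i => k i + 2) F =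
      (2 * X : R[X]) • wronMatrix (fun i => k i + 1) F +
        ((2 : R[X]) • (Matrix.diagonal (fun i => (k i : R[X])) * A) +
          A * Matrix.diagonal fun j => C (μ j)) := by
    ext1 i j
    simp only [hA, wronMatrix, Matrix.of_apply, (hF j).iterate_derivative_add_two, Matrix.add_apply,
      Matrix.smul_apply, Matrix.diagonal_mul, Matrix.mul_diagonal, smul_eq_mul]
    ring
  have trace_shift (d : ℕ) : ∑ i, wronMinor (Function.update k i (k i + d)) F =
      (wronMatrix (fun i => k i + d) F * A.adjugate).trace := by
    rw [← sum_det_updateRow]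
    exact Finset.sum_congr rfl fun i _ => wronMinor_update k i _ F
  rw [derivative_wronMinor, trace_shift, trace_shift, rows, add_mul, add_mul, Matrix.trace_add,
    Matrix.trace_add, Matrix.smul_mul, Matrix.smul_mul, Matrix.trace_smul, Matrix.trace_smul,
    trace_mul_mul_adjugate_self, trace_self_mul_mul_adjugate, Matrix.trace_diagonal,
    Matrix.trace_diagonal, map_sum]
  simp only [smul_eq_mul, wronMinor, ← hA]
  ring

theorem isExceptionalHermiteEigen_wronMinor {n : ℕ} {μ : Fin n → R} {F : Fin n → R[X]} {c : R}
    {g : R[X]} (hF : ∀ j, IsHermiteEigen (μ j) (F j)) (hg : IsHermiteEigen c g) :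
    IsExceptionalHermiteEigen (wronMinor Fin.val F) (c + 2 * n)
      (wronMinor Fin.val (Fin.snoc F g : Fin (n + 1) → R[X])) := by
  set G : Fin (n + 1) → R[X] := Fin.snoc F g with G_def
  have hG : ∀ j, IsHermiteEigen ((Fin.snoc μ c : Fin (n + 1) → R) j) (G j) := fun j => by
    induction j using Fin.lastCases with
    | last => simpa only [G_def, Fin.snoc_last] using hg
    | cast j => simpa only [G_def, Fin.snoc_castSucc] using hF j
  have sumF := sum_wronMinor_update_add_two hF Fin.val
  have sumG := sum_wronMinor_update_add_two hG Fin.val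
  have order_sum : ∑ i : Fin (n + 1), ((i : ℕ) : R[X]) = ∑ i : Fin n, ((i : ℕ) : R[X]) + n :=
    Fin.sum_univ_castSucc _
  have eigenvalue_sum : ∑ j, (Fin.snoc μ c : Fin (n + 1) → R) j = ∑ j, μ j + c := by
    simp only [Fin.sum_univ_castSucc, Fin.snoc_castSucc, Fin.snoc_last]
  rw [order_sum, eigenvalue_sum, C_add] at sumG
  have bilinear := wronMinor_snoc_bilinear F g
  simp only [← G_def, sumF, sumG] at bilinear
  simp only [IsExceptionalHermiteEigen, C_add, C_mul, C_ofNat, map_natCast]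
  linear_combination bilinear

end HermiteEigen

section PhysHermite

theorem derivative_physHermite_succ (n : ℕ) :
    derivative (physHermite (n + 1)) = 2 * (n + 1 : ℝ[X]) * physHermite n := by
  induction n with
  | zero => simp [physHermite]
  | succ n ih =>
    rw [physHermite, derivative_sub, ih]
    simp only [derivative_mul, derivative_add, derivative_ofNat, derivative_X, derivative_natCast,
      derivative_one, ih]
    rw [physHermite]
    push_cast
    ring

theorem isHermiteEigen_physHermite (n : ℕ) : IsHermiteEigen (-2 * n : ℝ) (physHermite n) := by
  unfold IsHermiteEigen
  cases n with
  | zero => simp [physHermite]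
  | succ n =>
    simp only [derivative_physHermite_succ, derivative_mul, derivative_add, derivative_ofNat,
      derivative_natCast, derivative_one, C_mul, C_neg, C_ofNat, map_natCast]
    rw [physHermite]
    push_cast
    ring

theorem isExceptionalHermiteEigen_xHermite {r : ℕ} (lam : Fin r → ℕ) {n : ℕ}
    (hn : ∑ i, lam i ≤ n + r) :
    IsExceptionalHermiteEigen (genHermite r lam) (2 * (∑ i, (lam i : ℝ) - n))
      (XHermite r lam n) := by
  have h := isExceptionalHermiteEigen_wronMinor
    (F := fun j : Fin r => physHermite (lam (Fin.rev j) + j))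
    (fun j => isHermiteEigen_physHermite _) (isHermiteEigen_physHermite (n + r - ∑ i, lam i))
  have eigenvalue : -2 * ((n + r - ∑ i, lam i : ℕ) : ℝ) + 2 * r = 2 * (∑ i, (lam i : ℝ) - n) := by
    push_cast [Nat.cast_sub hn]
    ring
  rwa [eigenvalue, wronMinor_val_eq_wron, wronMinor_val_eq_wron] at h

end PhysHermite

section PerfectDerivative

theorem IsExceptionalHermiteEigen.mul_derivative_wronskian {R : Type*} [CommRing R]
    {H P Q : R[X]} {α β : R}
    (hP : IsExceptionalHermiteEigen H α P) (hQ : IsExceptionalHermiteEigen H β Q) :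
    H * derivative (wronskian P Q) =
      2 * (X * H + derivative H) * wronskian P Q + C (β - α) * H * (P * Q) := by
  unfold IsExceptionalHermiteEigen at hP hQ
  simp only [wronskian, derivative_sub, derivative_mul, C_sub]
  linear_combination P * hQ - Q * hP

theorem hasDerivAt_exp_neg_sq_div_sq {H : ℝ[X]} {x : ℝ} (hx : H.eval x ≠ 0) :
    HasDerivAt (fun y => Real.exp (-y ^ 2) / H.eval y ^ 2)
      (-(2 * (x * H.eval x + (derivative H).eval x) / H.eval x) *
        (Real.exp (-x ^ 2) / H.eval x ^ 2)) x := by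
  have h := (hasDerivAt_pow 2 x).fun_neg.exp.fun_div ((H.hasDerivAt x).fun_pow 2)
    (pow_ne_zero 2 hx)
  refine h.congr_deriv ?_
  push_cast
  field_simp
  ring

theorem IsExceptionalHermiteEigen.hasDerivAt_wronskian {H P Q : ℝ[X]} {α β x : ℝ}
    (hP : IsExceptionalHermiteEigen H α P) (hQ : IsExceptionalHermiteEigen H β Q)
    (hαβ : α ≠ β) (hx : H.eval x ≠ 0) :
    HasDerivAt
      (fun y => (wronskian P Q).eval y / (β - α) * (Real.exp (-y ^ 2) / H.eval y ^ 2))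
      (P.eval x * Q.eval x * (Real.exp (-x ^ 2) / H.eval x ^ 2)) x := by
  have hβα : β - α ≠ 0 := sub_ne_zero.mpr hαβ.symm
  have heval := congrArg (eval x) (hP.mul_derivative_wronskian hQ)
  simp only [eval_mul, eval_add, eval_ofNat, eval_X, eval_C] at heval
  have hderiv : (derivative (wronskian P Q)).eval x =
      2 * (x * H.eval x + (derivative H).eval x) / H.eval x * (wronskian P Q).eval x +
        (β - α) * (P.eval x * Q.eval x) := by
    field_simp
    linear_combination heval
  refine ((((wronskian P Q).hasDerivAt x).div_const (β - α)).fun_mul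
    (hasDerivAt_exp_neg_sq_div_sq hx)).congr_deriv ?_
  rw [hderiv]
  field_simp
  ring

end PerfectDerivative

theorem XHermite_perfect_derivative_general
    (r : ℕ) (lam : Fin r → ℕ) (n m : ℕ) (hn : ∑ i, lam i ≤ n + r) (hm : ∑ i, lam i ≤ m + r)
    (hnm : n ≠ m) (x : ℝ) (hx : (genHermite r lam).eval x ≠ 0) :
    HasDerivAt
      (fun y : ℝ =>
        ((XHermite r lam n).eval y * (derivative (XHermite r lam m)).eval y
            - (derivative (XHermite r lam n)).eval y * (XHermite r lam m).eval y) /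
          (2 * ((n : ℝ) - (m : ℝ))) *
          (Real.exp (-y ^ 2) / ((genHermite r lam).eval y) ^ 2))
      ((XHermite r lam n).eval x * (XHermite r lam m).eval x *
        (Real.exp (-x ^ 2) / ((genHermite r lam).eval x) ^ 2)) x := by
  have eigenvalue_ne : 2 * (∑ i, (lam i : ℝ) - n) ≠ 2 * (∑ i, (lam i : ℝ) - m) := by
    simpa using hnm
  have eigenvalue_sub :
      2 * (∑ i, (lam i : ℝ) - m) - 2 * (∑ i, (lam i : ℝ) - n) = 2 * ((n : ℝ) - m) := by
    ring
  have h := (isExceptionalHermiteEigen_xHermite lam hn).hasDerivAt_wronskian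
    (isExceptionalHermiteEigen_xHermite lam hm) eigenvalue_ne hx
  simpa only [wronskian, eval_sub, eval_mul, eigenvalue_sub] using h

/-- Eq. (8): for `n, m ∈ N_λ` with `n ≠ m`, at every real `x` with `H_λ(x) ≠ 0`,
`P_n(x) P_m(x) e^{-x²}/H_λ(x)²` is the derivative at `x` of
`y ↦ (P_n(y) P_m'(y) - P_n'(y) P_m(y))/(2(n-m)) · e^{-y²}/H_λ(y)²`. -/
theorem XHermite_perfect_derivative
    (r : ℕ) (lam : Fin r → ℕ) (hpart : IsPartition r lam)
    (n m : ℕ) (hn : XDegSeq r lam n) (hm : XDegSeq r lam m) (hnm : n ≠ m)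
    (x : ℝ) (hx : (genHermite r lam).eval x ≠ 0) :
    HasDerivAt
      (fun y : ℝ =>
        ((XHermite r lam n).eval y * (derivative (XHermite r lam m)).eval y
            - (derivative (XHermite r lam n)).eval y * (XHermite r lam m).eval y) /
          (2 * ((n : ℝ) - (m : ℝ))) *
          (Real.exp (-y ^ 2) / ((genHermite r lam).eval y) ^ 2))
      ((XHermite r lam n).eval x * (XHermite r lam m).eval x *
        (Real.exp (-x ^ 2) / ((genHermite r lam).eval x) ^ 2)) x :=
  XHermite_perfect_derivative_general r lam n m hn.1 hm.1 hnm x hx
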